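/- Let R be a commutative Artinian ring and let B and A be Artin R-algebras such that B is representation-finite, and let φ : B → A be an R-algebra homomorphism preserving identities. Suppose 2 ≤ fd(φ) < ∞, where fd(φ) is the relative finitistic dimension of φ, and suppose that for every finitely generated left A-module X of finite projective dimension, the A-module A⊗_B X also has finite projective dimension. Then the finitistic dimension of A is finite. -/

import Mathlib

universe u

open TensorProduct

section Basic

variable (Λ : Type u) [Ring Λ]

/-- `ProjDimLE Λ n M` : the module `M` admits a projective resolution of length `≤ n`
by finitely generated projective `Λ`-modules. -/
def ProjDimLE : ℕ → ModuleCat.{u} Λ → Prop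
  | 0, M => Module.Projective Λ M
  | n + 1, M => ∃ (P : ModuleCat.{u} Λ) (g : P →ₗ[Λ] M),
      Module.Projective Λ P ∧ Module.Finite Λ P ∧ Function.Surjective g ∧
      ProjDimLE n (ModuleCat.of Λ (LinearMap.ker g))

/-- The finitistic dimension of `Λ` (computed on finitely generated modules) is finite. -/
def FinFinDim : Prop :=
  ∃ n : ℕ, ∀ M : ModuleCat.{u} Λ, Module.Finite Λ M →
    (∃ k : ℕ, ProjDimLE Λ k M) → ProjDimLE Λ n M

/-- A module is indecomposable. -/
def ModIndec (M : ModuleCat.{u} Λ) : Prop :=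
  Nontrivial M ∧ ∀ N₁ N₂ : Submodule Λ M, IsCompl N₁ N₂ → N₁ = ⊥ ∨ N₂ = ⊥

/-- A class of modules has only finitely many isomorphism classes of indecomposables. -/
def ClassRepFinite (C : ModuleCat.{u} Λ → Prop) : Prop :=
  ∃ (k : ℕ) (N : Fin k → ModuleCat.{u} Λ),
    ∀ M : ModuleCat.{u} Λ, C M → ModIndec Λ M → ∃ i, Nonempty (M ≃ₗ[Λ] N i)

/-- `Λ` is representation-finite. -/
def RepFinite : Prop :=
  ClassRepFinite Λ (fun M => Module.Finite Λ M)

/-- `X` belongs to `add N`: it is a direct summand of a finite direct sum of copies of `N`. -/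
def InAdd (N X : ModuleCat.{u} Λ) : Prop :=
  ∃ (k : ℕ) (i : X →ₗ[Λ] (Fin k → N)) (p : (Fin k → N) →ₗ[Λ] X),
    p.comp i = LinearMap.id

/-- A submodule is superfluous (small). -/
def IsSuperfluous {M : ModuleCat.{u} Λ} (N : Submodule Λ M) : Prop :=
  ∀ L : Submodule Λ M, L ⊔ N = ⊤ → L = ⊤

/-- `K` is (isomorphic to) the kernel of a projective cover of `M`, i.e. a first syzygy. -/
def IsSyzygyOf (K M : ModuleCat.{u} Λ) : Prop :=
  ∃ (P : ModuleCat.{u} Λ) (g : P →ₗ[Λ] M), Module.Projective Λ P ∧ Module.Finite Λ P ∧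
    Function.Surjective g ∧ IsSuperfluous Λ (LinearMap.ker g) ∧
    Nonempty (K ≃ₗ[Λ] LinearMap.ker g)

/-- `K` is an `n`-th syzygy of `M`. -/
def IsNthSyzygy : ℕ → ModuleCat.{u} Λ → ModuleCat.{u} Λ → Prop
  | 0, K, M => Nonempty (K ≃ₗ[Λ] M)
  | n + 1, K, M => ∃ K' : ModuleCat.{u} Λ, IsNthSyzygy n K' M ∧ IsSyzygyOf Λ K K'

/-- A class `C` of modules is `m`-syzygy-finite. -/
def MSyzygyFiniteClass (m : ℕ) (C : ModuleCat.{u} Λ → Prop) : Prop :=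
  ∃ N : ModuleCat.{u} Λ, Module.Finite Λ N ∧
    ∀ X, C X → ∀ K, IsNthSyzygy Λ m K X → InAdd Λ N K

/-- A class `C` of modules is syzygy-finite. -/
def SyzygyFiniteClass (C : ModuleCat.{u} Λ → Prop) : Prop :=
  ∃ m : ℕ, MSyzygyFiniteClass Λ m C

/-- `Λ` is 1-syzygy-finite. -/
def OneSyzygyFinite : Prop :=
  MSyzygyFiniteClass Λ 1 (fun X => Module.Finite Λ X)

/-- `Λ` is syzygy-finite. -/
def AlgSyzygyFinite : Prop :=
  SyzygyFiniteClass Λ (fun X => Module.Finite Λ X)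

/-- The Jacobson radical of `Λ` (intersection of the maximal left ideals). -/
def jacobsonRad : Ideal Λ := sInf {I : Ideal Λ | I.IsMaximal}

end Basic

/-- The Jacobson radical of a subalgebra, as a subset of the ambient algebra. -/
def radSet {R A : Type u} [CommRing R] [Ring A] [Algebra R A] (S : Subalgebra R A) : Set A :=
  Subtype.val '' ((jacobsonRad ↥S : Ideal ↥S) : Set ↥S)

section Rel

variable {R : Type u} [CommRing R] {B A : Type u} [Ring B] [Ring A]
  [Algebra R B] [Algebra R A] (φ : B →ₐ[R] A)

/-- The tensor product `A ⊗_B X` of the (A,B)-bimodule `A` with a left `A`-module `X`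
(viewed as a `B`-module via `φ`), realized as a quotient of `A ⊗_R X`. -/
noncomputable def relTensor (X : ModuleCat.{u} A) : ModuleCat.{u} A :=
  letI : Module R X := Module.compHom X (algebraMap R A)
  ModuleCat.of A ((A ⊗[R] X) ⧸ Submodule.span A
    {z : A ⊗[R] X | ∃ (a : A) (b : B) (x : X),
      z = (a * φ b) ⊗ₜ[R] x - a ⊗ₜ[R] (φ b • x)})

/-- `X` is `(A,B)`-projective: a direct summand of `A ⊗_B X`. -/
noncomputable def RelProjective (X : ModuleCat.{u} A) : Prop :=
  ∃ (i : X →ₗ[A] relTensor φ X) (p : relTensor φ X →ₗ[A] X), p.comp i = LinearMap.id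

/-- The map `g` admits a `B`-linear map `h` with `g ∘ h ∘ g = g`
(this encodes `(A,B)`-exactness of the corresponding short exact sequence). -/
def RelSplitB {P X : ModuleCat.{u} A} (g : P →ₗ[A] X) : Prop :=
  ∃ h : X →+ P, (∀ (b : B) (x : X), h (φ b • x) = φ b • h x) ∧
    ∀ p : P, g (h (g p)) = g p

/-- `RelProjDimLE φ n X` : `X` has an `(A,B)`-exact resolution of length `≤ n` by
finitely generated `(A,B)`-projective modules, i.e. relative projective dimension `≤ n`. -/
noncomputable def RelProjDimLE : ℕ → ModuleCat.{u} A → Prop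
  | 0, X => RelProjective φ X
  | n + 1, X => ∃ (P : ModuleCat.{u} A) (g : P →ₗ[A] X),
      RelProjective φ P ∧ Module.Finite A P ∧ Function.Surjective g ∧ RelSplitB φ g ∧
      RelProjDimLE n (ModuleCat.of A (LinearMap.ker g))

/-- Restriction of scalars along `φ` of an `A`-module, as an object of `ModuleCat B`. -/
def resMod (X : ModuleCat.{u} A) : ModuleCat.{u} B :=
  @ModuleCat.of B _ X _ (Module.compHom X φ.toRingHom)

/-- The right `B`-module structure on `A` induced by `φ`. -/
def rightModB : Module Bᵐᵒᵖ A :=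
  Module.compHom A (RingHom.op φ.toRingHom)

end Rel

variable {R : Type u} [CommRing R] [IsArtinianRing R]
  {B A : Type u} [Ring B] [Ring A] [Algebra R B] [Algebra R A]
  [Module.Finite R B] [Module.Finite R A]

/-!
For an `A`-module `X` let `Ω X` be the kernel of the `(A,B)`-exact cover `A ⊗_B X → X`. Comparing
this cover with an arbitrary `(A,B)`-exact resolution by a relative version of Schanuel's lemma
shows that `Ωⁿ X` is relatively projective as soon as `X` has relative projective dimension at
most `n`.

Since `B` is representation-finite, there are finitely many `A`-modules of finite projective
dimension whose restrictions to `B` contain all indecomposable summands of restrictions of such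
modules. With `Z` their direct sum, every `A ⊗_B X` with `X` of finite projective dimension lies
in `add (A ⊗_B Z)`, which bounds its projective dimension uniformly, say by `d`. As `Ωⁿ X` is a
summand of `A ⊗_B Ωⁿ X`, the same bound holds for it, and dimension shifting along the sequences
`0 → Ω Y → A ⊗_B Y → Y → 0` gives `d + n` as a bound for the projective dimension of `X`.
-/

open CategoryTheory

section Retracts

/-- `M` is a retract (equivalently, a direct summand) of `N`. -/
def IsRetract (Λ M N : Type*) [Ring Λ] [AddCommGroup M] [AddCommGroup N] [Module Λ M]
    [Module Λ N] : Prop :=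
  ∃ (i : M →ₗ[Λ] N) (p : N →ₗ[Λ] M), p ∘ₗ i = LinearMap.id

variable {Λ M N L K : Type*} [Ring Λ] [AddCommGroup M] [AddCommGroup N] [AddCommGroup L]
  [AddCommGroup K] [Module Λ M] [Module Λ N] [Module Λ L] [Module Λ K]

namespace IsRetract

lemma of_linearEquiv (e : M ≃ₗ[Λ] N) : IsRetract Λ M N :=
  ⟨e, e.symm, e.symm_comp⟩

lemma trans (h₁ : IsRetract Λ M N) (h₂ : IsRetract Λ N L) : IsRetract Λ M L := by
  obtain ⟨i, p, hpi⟩ := h₁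
  obtain ⟨j, q, hqj⟩ := h₂
  refine ⟨j ∘ₗ i, p ∘ₗ q, ?_⟩
  rw [LinearMap.comp_assoc, ← LinearMap.comp_assoc i, hqj, LinearMap.id_comp, hpi]

lemma prod (h₁ : IsRetract Λ M N) (h₂ : IsRetract Λ K L) : IsRetract Λ (M × K) (N × L) := by
  obtain ⟨i, p, hpi⟩ := h₁
  obtain ⟨j, q, hqj⟩ := h₂
  exact ⟨i.prodMap j, p.prodMap q, by rw [LinearMap.prodMap_comp, hpi, hqj, LinearMap.prodMap_id]⟩

lemma fst_prod : IsRetract Λ M (M × K) :=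
  ⟨.inl Λ M K, .fst Λ M K, LinearMap.fst_comp_inl Λ M K⟩

lemma pi_apply {ι : Type*} (F : ι → Type*) [∀ i, AddCommGroup (F i)] [∀ i, Module Λ (F i)]
    (i : ι) : IsRetract Λ (F i) (∀ i, F i) := by
  classical
  exact ⟨.single Λ F i, .proj i, LinearMap.proj_comp_single_same Λ F i⟩

lemma ker_prodMap_id (f : M →ₗ[Λ] N) :
    IsRetract Λ (LinearMap.ker (f.prodMap (LinearMap.id : K →ₗ[Λ] K))) (LinearMap.ker f) :=
  ⟨(LinearMap.fst Λ M K).restrict fun _ hz => congrArg Prod.fst hz,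
    (LinearMap.inl Λ M K).restrict fun _ hm => Prod.ext hm rfl,
    LinearMap.ext fun z => Subtype.ext (Prod.ext rfl (congrArg Prod.snd z.2).symm)⟩

/-- Schanuel's lemma for retracts: `z ↦ (l z, z)` embeds `ker f` into `ker g × M`, and
`(k, m) ↦ t k + (m - t (l m))` retracts it. -/
lemma ker_of_lifts {f : M →ₗ[Λ] N} {g : K →ₗ[Λ] L} {i : N →ₗ[Λ] L} {p : L →ₗ[Λ] N}
    (hpi : p ∘ₗ i = LinearMap.id) {l : M →ₗ[Λ] K} {t : K →ₗ[Λ] M} (hl : g ∘ₗ l = i ∘ₗ f)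
    (ht : f ∘ₗ t = p ∘ₗ g) :
    IsRetract Λ (LinearMap.ker f) (LinearMap.ker g × M) := by
  have hl' (m : M) : g (l m) = i (f m) := LinearMap.congr_fun hl m
  have ht' (k : K) : f (t k) = p (g k) := LinearMap.congr_fun ht k
  have hpi' (n : N) : p (i n) = n := LinearMap.congr_fun hpi n
  refine ⟨(l.restrict fun m hm => ?_).prod (LinearMap.ker f).subtype,
    (t.restrict fun k hk => ?_).coprod
      (LinearMap.codRestrict (LinearMap.ker f) (LinearMap.id - t ∘ₗ l) fun m => ?_), ?_⟩
  · simp_all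
  · simp_all
  · simp [hl', ht', hpi']
  · refine LinearMap.ext fun z => Subtype.ext ?_
    simp

end IsRetract

end Retracts

section ProjectiveDimension

variable {Λ : Type u} [Ring Λ]

lemma IsRetract.hasProjectiveDimensionLT {X Y : ModuleCat.{u} Λ} (h : IsRetract Λ X Y) (n : ℕ)
    [HasProjectiveDimensionLT Y n] : HasProjectiveDimensionLT X n := by
  obtain ⟨i, p, hpi⟩ := h
  refine Retract.hasProjectiveDimensionLT (Y := Y) ⟨ModuleCat.ofHom i, ModuleCat.ofHom p, ?_⟩ n
  rw [← ModuleCat.ofHom_comp, hpi]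
  rfl

lemma hasProjectiveDimensionLT_pi {ι : Type} [Finite ι] (X : ι → ModuleCat.{u} Λ) (n : ℕ)
    [∀ i, HasProjectiveDimensionLT (X i) n] :
    HasProjectiveDimensionLT (ModuleCat.of Λ (∀ i, X i)) n := by
  refine Module.pi_induction' Λ
    (motive := fun M _ _ => HasProjectiveDimensionLT (ModuleCat.of Λ M) n)
    (motive' := fun M _ _ => HasProjectiveDimensionLT (ModuleCat.of Λ M) n)
    (fun e _ => hasProjectiveDimensionLT_of_iso e.toModuleIso n)
    (fun e _ => hasProjectiveDimensionLT_of_iso e.toModuleIso n) ?_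
    (fun {M N} _ _ _ _ _ _ => hasProjectiveDimensionLT_of_iso
      (ModuleCat.biprodIsoProd (ModuleCat.of Λ M) (ModuleCat.of Λ N)) n)
    (fun i => X i) (fun i => inferInstance)
  have := (ModuleCat.isZero_of_subsingleton
    (ModuleCat.of Λ PUnit.{u + 1})).hasProjectiveDimensionLT_zero
  exact hasProjectiveDimensionLT_of_ge _ 0 n n.zero_le

lemma exists_hasProjectiveDimensionLT_pi {ι : Type} [Finite ι] {X : ι → ModuleCat.{u} Λ}
    (hX : ∀ i, ∃ n, HasProjectiveDimensionLT (X i) n) :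
    ∃ n, HasProjectiveDimensionLT (ModuleCat.of Λ (∀ i, X i)) n := by
  choose n hn using hX
  obtain ⟨N, hN⟩ := (Set.finite_range n).bddAbove
  have (i : ι) : HasProjectiveDimensionLT (X i) N :=
    hasProjectiveDimensionLT_of_ge _ (n i) N (hN (Set.mem_range_self i))
  exact ⟨N, hasProjectiveDimensionLT_pi X N⟩

lemma InAdd.hasProjectiveDimensionLT {N X : ModuleCat.{u} Λ} (h : InAdd Λ N X) (n : ℕ)
    [HasProjectiveDimensionLT N n] : HasProjectiveDimensionLT X n := by
  obtain ⟨k, hX⟩ := h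
  have := hasProjectiveDimensionLT_pi (fun _ : Fin k => N) n
  exact IsRetract.hasProjectiveDimensionLT (Y := ModuleCat.of Λ (Fin k → N)) hX n

lemma projDimLE_iff_hasProjectiveDimensionLE [IsNoetherianRing Λ] (n : ℕ)
    (M : ModuleCat.{u} Λ) [Module.Finite Λ M] :
    ProjDimLE Λ n M ↔ HasProjectiveDimensionLE M n := by
  induction n generalizing M with
  | zero =>
    rw [← projective_iff_hasProjectiveDimensionLE_zero]
    exact IsProjective.iff_projective M
  | succ n ih =>
    have ker_iff {P : ModuleCat.{u} Λ} [Module.Projective Λ P] {g : P →ₗ[Λ] M}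
        (hg : Function.Surjective g) : HasProjectiveDimensionLE M (n + 1) ↔
          HasProjectiveDimensionLE (ModuleCat.of Λ (LinearMap.ker g)) n :=
      (LinearMap.shortExact_shortComplexKer hg).hasProjectiveDimensionLT_X₃_iff n
        ((IsProjective.iff_projective P).1 inferInstance)
    constructor
    · rintro ⟨P, g, _, _, hg, hK⟩
      exact (ker_iff hg).2 ((ih _).1 hK)
    · intro h
      obtain ⟨m, g, hg⟩ := Module.Finite.exists_fin' Λ M
      exact ⟨ModuleCat.of Λ (Fin m → Λ), g, inferInstanceAs (Module.Projective Λ (Fin m → Λ)),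
        inferInstanceAs (Module.Finite Λ (Fin m → Λ)), hg, (ih _).2 ((ker_iff hg).1 h)⟩

lemma exists_projDimLE_iff [IsNoetherianRing Λ] (M : ModuleCat.{u} Λ) [Module.Finite Λ M] :
    (∃ k, ProjDimLE Λ k M) ↔ ∃ k, HasProjectiveDimensionLT M k := by
  simp only [projDimLE_iff_hasProjectiveDimensionLE]
  exact ⟨fun ⟨k, _⟩ => ⟨k + 1, inferInstance⟩,
    fun ⟨k, _⟩ => ⟨k, hasProjectiveDimensionLT_of_ge M k (k + 1) k.le_succ⟩⟩

end ProjectiveDimension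

section AdditiveClosure

variable {Λ : Type u} [Ring Λ]

namespace InAdd

variable {N X Y : ModuleCat.{u} Λ}

lemma of_isRetract (h : IsRetract Λ X N) : InAdd Λ N X :=
  ⟨1, h.trans (.of_linearEquiv (LinearEquiv.funUnique (Fin 1) Λ N).symm)⟩

lemma of_subsingleton [Subsingleton X] : InAdd Λ N X :=
  ⟨0, 0, 0, Subsingleton.elim _ _⟩

lemma isRetract_trans (h : IsRetract Λ X Y) (hY : InAdd Λ N Y) : InAdd Λ N X :=
  let ⟨k, hk⟩ := hY
  ⟨k, h.trans hk⟩

lemma prod (hX : InAdd Λ N X) (hY : InAdd Λ N Y) : InAdd Λ N (ModuleCat.of Λ (X × Y)) := by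
  obtain ⟨k, hk⟩ := hX
  obtain ⟨l, hl⟩ := hY
  let e : ((Fin k → N) × (Fin l → N)) ≃ₗ[Λ] (Fin (k + l) → N) :=
    (LinearEquiv.sumPiEquivProdPi Λ (Fin k) (Fin l) fun _ => N).symm ≪≫ₗ
      LinearEquiv.funCongrLeft Λ N finSumFinEquiv.symm
  exact ⟨k + l, (IsRetract.prod hk hl).trans (.of_linearEquiv e)⟩

lemma of_isCompl {N₁ N₂ : Submodule Λ X} (h : IsCompl N₁ N₂)
    (h₁ : InAdd Λ N (ModuleCat.of Λ N₁)) (h₂ : InAdd Λ N (ModuleCat.of Λ N₂)) : InAdd Λ N X :=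
  (h₁.prod h₂).isRetract_trans (.of_linearEquiv (Submodule.prodEquivOfIsCompl N₁ N₂ h).symm)

lemma of_forall_modIndec [IsArtinianRing Λ] [Module.Finite Λ X]
    (h : ∀ L : ModuleCat.{u} Λ, Module.Finite Λ L → ModIndec Λ L → IsRetract Λ L X →
      InAdd Λ N L) : InAdd Λ N X := by
  induction hl : Module.length Λ X using WellFoundedLT.induction generalizing X with
  | ind l ih =>
    subst hl
    rcases subsingleton_or_nontrivial X with hX | hX
    · exact of_subsingleton
    by_cases hi : ModIndec Λ X
    · exact h X inferInstance hi (.of_linearEquiv (.refl Λ X))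
    obtain ⟨N₁, N₂, hN, h₁, h₂⟩ : ∃ N₁ N₂ : Submodule Λ X, IsCompl N₁ N₂ ∧ N₁ ≠ ⊥ ∧ N₂ ≠ ⊥ := by
      simpa [ModIndec, hX] using hi
    have inAdd_of_isCompl {P Q : Submodule Λ X} (hPQ : IsCompl P Q) (hQ : Q ≠ ⊥) :
        InAdd Λ N (ModuleCat.of Λ P) := by
      have hP : P ≠ ⊤ := fun e => hQ (disjoint_top.1 (e ▸ hPQ.disjoint.symm))
      refine ih _ (Submodule.length_lt hP) (fun L hL hLi hLP => h L hL hLi (hLP.trans ?_)) rfl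
      exact ⟨P.subtype, P.projectionOnto Q hPQ, LinearMap.ext fun x => by simp⟩
    exact of_isCompl hN (inAdd_of_isCompl hN h₂) (inAdd_of_isCompl hN.symm h₁)

end InAdd

/-- Only finitely many indecomposables occur as summands of the members of `F`; choose one member
of `F` containing each of them. -/
lemma RepFinite.exists_inAdd_pi [IsArtinianRing Λ] (hΛ : RepFinite Λ) {ι : Type*}
    (F : ι → ModuleCat.{u} Λ) [∀ i, Module.Finite Λ (F i)] :
    ∃ (κ : Type) (_ : Finite κ) (c : κ → ι),
      ∀ i, InAdd Λ (ModuleCat.of Λ (∀ k, F (c k))) (F i) := by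
  obtain ⟨m, N, hN⟩ := hΛ
  choose c hc using fun k : {j : Fin m // ∃ i, IsRetract Λ (N j) (F i)} => k.2
  refine ⟨_, inferInstance, c, fun i => InAdd.of_forall_modIndec fun L hL hLi hLF => ?_⟩
  obtain ⟨j, ⟨e⟩⟩ := hN L hL hLi
  let k : {j : Fin m // ∃ i, IsRetract Λ (N j) (F i)} :=
    ⟨j, i, (IsRetract.of_linearEquiv e.symm).trans hLF⟩
  exact .of_isRetract <| (IsRetract.of_linearEquiv e).trans <| (hc k).trans <|
    IsRetract.pi_apply (fun k => F (c k)) k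

end AdditiveClosure

section RelativeTensor

variable {R : Type u} [CommRing R] {B A : Type u} [Ring B] [Ring A]
  [Algebra R B] [Algebra R A] (φ : B →ₐ[R] A) {X Y Z : ModuleCat.{u} A}

/-- An `A`-linear map, regarded as a `B`-linear map by restriction of scalars along `φ`. -/
def resMap (f : X →ₗ[A] Y) : resMod φ X →ₗ[B] resMod φ Y where
  toFun := f
  map_add' := f.map_add
  map_smul' b := f.map_smul (φ b)

/-- The unit `x ↦ 1 ⊗ x` of the induction-restriction adjunction. -/
noncomputable def relUnit (X : ModuleCat.{u} A) : resMod φ X →ₗ[B] resMod φ (relTensor φ X) :=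
  letI : Module R X := Module.compHom X (algebraMap R A)
  { toFun := fun x : X => Submodule.Quotient.mk ((1 : A) ⊗ₜ[R] x)
    map_add' := fun x y : X => congrArg Submodule.Quotient.mk (TensorProduct.tmul_add 1 x y)
    map_smul' := fun b (x : X) => by
      refine Eq.symm ((Submodule.Quotient.eq _).2 (Submodule.subset_span ⟨1, b, x, ?_⟩))
      change (φ b * 1) ⊗ₜ[R] x - _ = _
      rw [mul_one, one_mul]
      rfl }

variable {φ} in
lemma relTensor_hom_ext {F G : relTensor φ X →ₗ[A] Y}
    (h : resMap φ F ∘ₗ relUnit φ X = resMap φ G ∘ₗ relUnit φ X) : F = G := by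
  let : Module R X := Module.compHom X (algebraMap R A)
  let : Module R Y := Module.compHom Y (algebraMap R A)
  have : IsScalarTower R A Y := ⟨fun r a y => by rw [Algebra.smul_def, mul_smul]; rfl⟩
  refine Submodule.linearMap_qext _ (TensorProduct.AlgebraTensorModule.curry_injective ?_)
  ext x
  exact LinearMap.congr_fun h x

/-- The `A`-linear map `a ⊗ x ↦ a • h x` corresponding to a `B`-linear map `h` under the
induction-restriction adjunction. -/
noncomputable def relTensorLift (h : resMod φ X →ₗ[B] resMod φ Y) : relTensor φ X →ₗ[A] Y :=
  letI : Module R X := Module.compHom X (algebraMap R A)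
  letI : Module R Y := Module.compHom Y (algebraMap R A)
  haveI : IsScalarTower R A Y := ⟨fun r a y => by rw [Algebra.smul_def, mul_smul]; rfl⟩
  let h' : X →+ Y := h.toAddMonoidHom
  have h'_smul (b : B) (x : X) : h' (φ b • x) = φ b • h' x := h.map_smul b x
  let hR : X →ₗ[R] Y :=
    { h' with
      map_smul' := fun r x => by
        change h' (algebraMap R A r • x) = algebraMap R A r • h' x
        rw [← φ.commutes r, h'_smul] }
  Submodule.liftQ _
    (TensorProduct.AlgebraTensorModule.lift (LinearMap.toSpanSingleton A (X →ₗ[R] Y) hR)) <| by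
    rw [Submodule.span_le]
    rintro _ ⟨a, b, x, rfl⟩
    have hR_balanced : (a * φ b) • hR x = a • hR (φ b • x) := by
      rw [mul_smul]
      exact congrArg (a • ·) (h'_smul b x).symm
    simpa [sub_eq_zero] using hR_balanced

@[simp]
lemma resMap_relTensorLift_comp_relUnit (h : resMod φ X →ₗ[B] resMod φ Y) :
    resMap φ (relTensorLift φ h) ∘ₗ relUnit φ X = h :=
  LinearMap.ext fun x => one_smul A (show Y from h x)

/-- The additive functor `A ⊗_B -` on `B`-linear maps between `A`-modules. -/
noncomputable def relTensorMap :
    (resMod φ X →ₗ[B] resMod φ Y) →+ (relTensor φ X →ₗ[A] relTensor φ Y) :=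
  .mk' (fun h => relTensorLift φ (relUnit φ Y ∘ₗ h)) fun g h => relTensor_hom_ext <| by
    have resMap_add (F G : relTensor φ X →ₗ[A] relTensor φ Y) :
        resMap φ (F + G) = resMap φ F + resMap φ G := rfl
    rw [resMap_add, LinearMap.add_comp]
    simp only [resMap_relTensorLift_comp_relUnit, LinearMap.comp_add]

@[simp]
lemma resMap_relTensorMap_comp_relUnit (h : resMod φ X →ₗ[B] resMod φ Y) :
    resMap φ (relTensorMap φ h) ∘ₗ relUnit φ X = relUnit φ Y ∘ₗ h :=
  resMap_relTensorLift_comp_relUnit φ _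

lemma resMap_comp (g : Y →ₗ[A] Z) (f : X →ₗ[A] Y) :
    resMap φ (g ∘ₗ f) = resMap φ g ∘ₗ resMap φ f :=
  rfl

lemma relTensorMap_id : relTensorMap φ (LinearMap.id : resMod φ X →ₗ[B] resMod φ X) = .id :=
  relTensor_hom_ext (resMap_relTensorMap_comp_relUnit φ _)

lemma relTensorMap_comp (g : resMod φ Y →ₗ[B] resMod φ Z) (h : resMod φ X →ₗ[B] resMod φ Y) :
    relTensorMap φ (g ∘ₗ h) = relTensorMap φ g ∘ₗ relTensorMap φ h :=
  relTensor_hom_ext <| by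
    rw [resMap_comp, LinearMap.comp_assoc, resMap_relTensorMap_comp_relUnit,
      resMap_relTensorMap_comp_relUnit, ← LinearMap.comp_assoc, ← LinearMap.comp_assoc,
      resMap_relTensorMap_comp_relUnit]

variable {φ} in
lemma InAdd.relTensor (h : InAdd B (resMod φ Z) (resMod φ X)) :
    InAdd A (relTensor φ Z) (relTensor φ X) := by
  obtain ⟨k, i, p, hpi⟩ := h
  let i' (j : Fin k) : resMod φ X →ₗ[B] resMod φ Z := .proj j ∘ₗ i
  let p' (j : Fin k) : resMod φ Z →ₗ[B] resMod φ X := p ∘ₗ .single B (fun _ => resMod φ Z) j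
  have sum_comp : ∑ j, p' j ∘ₗ i' j = LinearMap.id := by
    rw [← hpi]
    ext x
    simp only [i', p', LinearMap.sum_apply, LinearMap.comp_apply, ← map_sum]
    exact congrArg p (Finset.univ_sum_single (i x))
  refine ⟨k, .pi fun j => relTensorMap φ (i' j), ∑ j, relTensorMap φ (p' j) ∘ₗ .proj j, ?_⟩
  calc (∑ j, relTensorMap φ (p' j) ∘ₗ .proj j) ∘ₗ .pi (fun j => relTensorMap φ (i' j))
      = ∑ j, relTensorMap φ (p' j) ∘ₗ relTensorMap φ (i' j) := by
        ext x
        simp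
    _ = relTensorMap φ (∑ j, p' j ∘ₗ i' j) := by
        simp only [map_sum, relTensorMap_comp]
    _ = LinearMap.id := by rw [sum_comp, relTensorMap_id]

/-- The counit `a ⊗ x ↦ a • x` of the induction-restriction adjunction. -/
noncomputable def relCounit (X : ModuleCat.{u} A) : relTensor φ X →ₗ[A] X :=
  relTensorLift φ LinearMap.id

lemma resMap_relCounit_comp_relUnit (X : ModuleCat.{u} A) :
    resMap φ (relCounit φ X) ∘ₗ relUnit φ X = LinearMap.id :=
  resMap_relTensorLift_comp_relUnit φ LinearMap.id

lemma relCounit_surjective (X : ModuleCat.{u} A) : Function.Surjective (relCounit φ X) :=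
  fun x => ⟨relUnit φ X x, LinearMap.congr_fun (resMap_relCounit_comp_relUnit φ X) x⟩

end RelativeTensor

section FiniteGeneration

variable {R : Type u} [CommRing R] {B A : Type u} [Ring B] [Ring A]
  [Algebra R B] [Algebra R A] (φ : B →ₐ[R] A)

lemma finite_resMod_self [Module.Finite R A] : Module.Finite B (resMod φ (ModuleCat.of A A)) := by
  let : Module B A := Module.compHom A φ.toRingHom
  have : IsScalarTower R B A := ⟨fun r b a => by
    change φ (r • b) * a = r • (φ b * a)
    rw [map_smul, smul_mul_assoc]⟩
  exact Module.Finite.of_restrictScalars_finite R B A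

variable [Module.Finite B (resMod φ (ModuleCat.of A A))]

lemma finite_resMod (X : ModuleCat.{u} A) [Module.Finite A X] : Module.Finite B (resMod φ X) := by
  obtain ⟨n, g, hg⟩ := Module.Finite.exists_fin' A X
  have : Module.Finite B (resMod φ (ModuleCat.of A (Fin n → A))) :=
    inferInstanceAs (Module.Finite B (Fin n → resMod φ (ModuleCat.of A A)))
  exact Module.Finite.of_surjective (resMap φ (X := ModuleCat.of A (Fin n → A)) g) hg

include φ in
lemma isNoetherianRing_of_finite_resMod_self [IsNoetherianRing B] : IsNoetherianRing A := by
  let : Module B A := Module.compHom A φ.toRingHom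
  have : IsScalarTower B A A := ⟨fun b a c => mul_assoc (φ b) a c⟩
  exact isNoetherian_of_tower B (inferInstanceAs (IsNoetherian B (resMod φ (ModuleCat.of A A))))

/-- The units `1 ⊗ s`, for `s` in a finite `B`-generating set of `X`, generate `A ⊗_B X`. -/
lemma finite_relTensor (X : ModuleCat.{u} A) [Module.Finite A X] :
    Module.Finite A (relTensor φ X) := by
  obtain ⟨S, hS⟩ := (finite_resMod φ X).fg_top
  let N : Submodule A (relTensor φ X) := Submodule.span A (relUnit φ X '' S)
  have relUnit_mem : ∀ s ∈ S, relUnit φ X s ∈ N := fun s hs =>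
    Submodule.subset_span (Set.mem_image_of_mem _ hs)
  have mkQ_eq_zero : N.mkQ = 0 := by
    refine relTensor_hom_ext (Y := ModuleCat.of A (relTensor φ X ⧸ N)) ?_
    refine LinearMap.ext_on hS fun s hs => ?_
    exact (Submodule.Quotient.mk_eq_zero N).2 (relUnit_mem s hs)
  have N_eq_top : N = ⊤ := by rw [← N.ker_mkQ, mkQ_eq_zero, LinearMap.ker_zero]
  exact ⟨N_eq_top ▸ Submodule.fg_span (S.finite_toSet.image _)⟩

end FiniteGeneration

section RelativeProjectives

variable {R : Type u} [CommRing R] {B A : Type u} [Ring B] [Ring A]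
  [Algebra R B] [Algebra R A] {φ : B →ₐ[R] A} {P Q W X Y : ModuleCat.{u} A}

lemma RelSplitB.exists_section {g : X →ₗ[A] Y} (hg : Function.Surjective g)
    (h : RelSplitB φ g) : ∃ s : resMod φ Y →ₗ[B] resMod φ X, resMap φ g ∘ₗ s = LinearMap.id := by
  obtain ⟨s, hs, hgs⟩ := h
  refine ⟨{ s with map_smul' := hs }, LinearMap.ext fun y => ?_⟩
  obtain ⟨x, rfl⟩ := hg y
  exact hgs x

namespace RelProjective

lemma exists_lift (hP : RelProjective φ P) {g : X →ₗ[A] Y} {s : resMod φ Y →ₗ[B] resMod φ X}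
    (hs : resMap φ g ∘ₗ s = LinearMap.id) (f : P →ₗ[A] Y) : ∃ t : P →ₗ[A] X, g ∘ₗ t = f := by
  obtain ⟨i, p, hpi⟩ := hP
  let F : relTensor φ P →ₗ[A] X := relTensorLift φ (s ∘ₗ resMap φ (f ∘ₗ p) ∘ₗ relUnit φ P)
  have hF : g ∘ₗ F = f ∘ₗ p := relTensor_hom_ext <| by
    rw [resMap_comp, LinearMap.comp_assoc, resMap_relTensorLift_comp_relUnit,
      ← LinearMap.comp_assoc, hs, LinearMap.id_comp]
  refine ⟨F ∘ₗ i, ?_⟩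
  rw [← LinearMap.comp_assoc, hF, LinearMap.comp_assoc, hpi, LinearMap.comp_id]

lemma exists_lift_relCounit (hP : RelProjective φ P) (f : P →ₗ[A] X) :
    ∃ t : P →ₗ[A] relTensor φ X, relCounit φ X ∘ₗ t = f :=
  hP.exists_lift (resMap_relCounit_comp_relUnit φ X) f

lemma of_isRetract (h : IsRetract A X P) (hP : RelProjective φ P) : RelProjective φ X := by
  obtain ⟨i, p, hpi⟩ := h
  obtain ⟨t, ht⟩ := hP.exists_lift_relCounit p
  exact ⟨t ∘ₗ i, relCounit φ X, by rw [← LinearMap.comp_assoc, ht, hpi]⟩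

lemma prod (hP : RelProjective φ P) (hQ : RelProjective φ Q) :
    RelProjective φ (ModuleCat.of A (P × Q)) := by
  let PQ := ModuleCat.of A (P × Q)
  obtain ⟨t, ht⟩ := hP.exists_lift_relCounit (X := PQ) (.inl A P Q)
  obtain ⟨t', ht'⟩ := hQ.exists_lift_relCounit (X := PQ) (.inr A P Q)
  refine ⟨t.coprod t', relCounit φ PQ, ?_⟩
  rw [LinearMap.comp_coprod, ht, ht']
  exact LinearMap.coprod_inl_inr

end RelProjective

lemma relProjective_relTensor (X : ModuleCat.{u} A) : RelProjective φ (relTensor φ X) := by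
  refine ⟨relTensorMap φ (relUnit φ X), relCounit φ _, relTensor_hom_ext ?_⟩
  rw [resMap_comp, LinearMap.comp_assoc, resMap_relTensorMap_comp_relUnit, ← LinearMap.comp_assoc,
    resMap_relCounit_comp_relUnit]
  rfl

variable (φ) in
/-- The canonical relative syzygy of `X`: the kernel of the `(A,B)`-exact cover
`A ⊗_B X → X`. -/
noncomputable def relSyzygy (X : ModuleCat.{u} A) : ModuleCat.{u} A :=
  ModuleCat.of A (LinearMap.ker (relCounit φ X))

lemma IsRetract.relSyzygy_of_relSplitB {g : P →ₗ[A] W} (hP : RelProjective φ P)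
    (hg : Function.Surjective g) (hgs : RelSplitB φ g) (hQ : RelProjective φ Q)
    (hX : IsRetract A X (W × Q)) :
    IsRetract A (relSyzygy φ X) (LinearMap.ker g × relTensor φ X) := by
  obtain ⟨i, p, hpi⟩ := hX
  obtain ⟨s, hs⟩ := hgs.exists_section hg
  let ε := relCounit φ X
  let g' : P × Q →ₗ[A] W × Q := g.prodMap LinearMap.id
  obtain ⟨l, hl⟩ := (relProjective_relTensor X).exists_lift hs (.fst A W Q ∘ₗ i ∘ₗ ε)
  obtain ⟨t, ht⟩ := (hP.prod hQ).exists_lift_relCounit (p ∘ₗ g')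
  have hl' : g' ∘ₗ l.prod (.snd A W Q ∘ₗ i ∘ₗ ε) = i ∘ₗ ε :=
    LinearMap.ext fun z => Prod.ext (LinearMap.congr_fun hl z) rfl
  exact (IsRetract.ker_of_lifts hpi hl' ht).trans
    ((IsRetract.ker_prodMap_id g).prod (.of_linearEquiv (.refl A _)))

/-- The retract `X` of `W × Q`, rather than `W` itself, is what makes the induction work: the
comparison of the two covers produces a relatively projective summand at each step. -/
lemma IsRetract.relProjective_iterate_relSyzygy {n : ℕ} (hW : RelProjDimLE φ n W)
    (hQ : RelProjective φ Q) (hX : IsRetract A X (W × Q)) :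
    RelProjective φ ((relSyzygy φ)^[n] X) := by
  induction n generalizing W Q X with
  | zero => exact .of_isRetract (P := ModuleCat.of A (W × Q)) hX (.prod hW hQ)
  | succ n ih =>
    obtain ⟨P, g, hP, -, hg, hgs, hK⟩ := hW
    exact ih hK (relProjective_relTensor X) (.relSyzygy_of_relSplitB hP hg hgs hQ hX)

lemma RelProjDimLE.relProjective_iterate_relSyzygy {n : ℕ} (hX : RelProjDimLE φ n X) :
    RelProjective φ ((relSyzygy φ)^[n] X) :=
  IsRetract.relProjective_iterate_relSyzygy hX (relProjective_relTensor X) .fst_prod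

end RelativeProjectives

section FinitisticDimension

variable {R : Type u} [CommRing R] {B A : Type u} [Ring B] [Ring A]
  [Algebra R B] [Algebra R A] {φ : B →ₐ[R] A}

lemma hasProjectiveDimensionLT_of_iterate_relSyzygy {C : ModuleCat.{u} A → Prop} {d : ℕ}
    (hC : ∀ X, C X → C (relSyzygy φ X))
    (hd : ∀ X, C X → HasProjectiveDimensionLT (relTensor φ X) d) {n : ℕ} {X : ModuleCat.{u} A}
    (hX : C X) (hn : RelProjective φ ((relSyzygy φ)^[n] X)) :
    HasProjectiveDimensionLT X (d + n) := by
  induction n generalizing X with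
  | zero =>
    have := hd X hX
    exact IsRetract.hasProjectiveDimensionLT (X := X) (Y := relTensor φ X) hn d
  | succ n ih =>
    have := hd X hX
    exact (LinearMap.shortExact_shortComplexKer
      (relCounit_surjective φ X)).hasProjectiveDimensionLT_X₃ (d + n) (ih (hC X hX) hn)
      (hasProjectiveDimensionLT_of_ge _ d _ (by lia))

lemma exists_hasProjectiveDimensionLT_relSyzygy {X : ModuleCat.{u} A}
    (hX : ∃ k, HasProjectiveDimensionLT X k)
    (hT : ∃ k, HasProjectiveDimensionLT (relTensor φ X) k) :
    ∃ k, HasProjectiveDimensionLT (relSyzygy φ X) k := by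
  obtain ⟨k, hk⟩ := hX
  obtain ⟨d, hd⟩ := hT
  exact ⟨max k d, (LinearMap.shortExact_shortComplexKer
    (relCounit_surjective φ X)).hasProjectiveDimensionLT_X₁ (max k d)
      (hasProjectiveDimensionLT_of_ge _ d _ (le_max_right k d))
      (hasProjectiveDimensionLT_of_ge _ k _ (by lia))⟩

variable [Module.Finite B (resMod φ (ModuleCat.of A A))]

/-- All the `A ⊗_B X` lie in `add (A ⊗_B Z)` for a single finite direct sum `Z` of modules of
finite projective dimension. -/
lemma RepFinite.exists_hasProjectiveDimensionLT_relTensor [IsArtinianRing B] (hB : RepFinite B)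
    (hT : ∀ X : ModuleCat.{u} A, Module.Finite A X → (∃ k, HasProjectiveDimensionLT X k) →
      ∃ k, HasProjectiveDimensionLT (relTensor φ X) k) :
    ∃ d, ∀ X : ModuleCat.{u} A, Module.Finite A X → (∃ k, HasProjectiveDimensionLT X k) →
      HasProjectiveDimensionLT (relTensor φ X) d := by
  let ι := {X : ModuleCat.{u} A // Module.Finite A X ∧ ∃ k, HasProjectiveDimensionLT X k}
  have (X : ι) : Module.Finite A X.1 := X.2.1
  have (X : ι) : Module.Finite B (resMod φ X.1) := finite_resMod φ X.1
  obtain ⟨κ, _, c, hc⟩ := hB.exists_inAdd_pi fun X : ι => resMod φ X.1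
  let Z := ModuleCat.of A (∀ k, (c k).1)
  obtain ⟨d, _⟩ := hT Z (inferInstanceAs (Module.Finite A (∀ k, (c k).1)))
    (exists_hasProjectiveDimensionLT_pi fun k => (c k).2.2)
  refine ⟨d, fun X hX hk => ?_⟩
  have inAdd_Z : InAdd B (resMod φ Z) (resMod φ X) := hc ⟨X, hX, hk⟩
  exact inAdd_Z.relTensor.hasProjectiveDimensionLT d

end FinitisticDimension

theorem statement1_general {R : Type u} [CommRing R] {B A : Type u} [Ring B] [Ring A]
    [Algebra R B] [Algebra R A] [IsArtinianRing B] (φ : B →ₐ[R] A)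
    [Module.Finite B (resMod φ (ModuleCat.of A A))]
    (hB : RepFinite B)
    (hfd_lt_top : ∃ n : ℕ, ∀ X : ModuleCat.{u} A, Module.Finite A X →
      (∃ k : ℕ, ProjDimLE A k X) → RelProjDimLE φ n X)
    (htensor : ∀ X : ModuleCat.{u} A, Module.Finite A X → (∃ k : ℕ, ProjDimLE A k X) →
      ∃ k : ℕ, ProjDimLE A k (relTensor φ X)) :
    FinFinDim A := by
  have : IsNoetherianRing A := isNoetherianRing_of_finite_resMod_self φ
  let C (X : ModuleCat.{u} A) : Prop := Module.Finite A X ∧ ∃ k, HasProjectiveDimensionLT X k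
  have hT (X) : C X → ∃ k, HasProjectiveDimensionLT (relTensor φ X) k := fun ⟨hX, hk⟩ =>
    have := finite_relTensor φ X
    (exists_projDimLE_iff _).1 (htensor X hX ((exists_projDimLE_iff X).2 hk))
  have hC (X) (hX : C X) : C (relSyzygy φ X) :=
    have := hX.1
    have := finite_relTensor φ X
    ⟨inferInstanceAs (Module.Finite A (LinearMap.ker (relCounit φ X))),
      exists_hasProjectiveDimensionLT_relSyzygy hX.2 (hT X hX)⟩
  obtain ⟨d, hd⟩ := hB.exists_hasProjectiveDimensionLT_relTensor fun X hX hk => hT X ⟨hX, hk⟩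
  obtain ⟨n, hn⟩ := hfd_lt_top
  refine ⟨d + n, fun X hX hk => (projDimLE_iff_hasProjectiveDimensionLE _ X).2 ?_⟩
  have : HasProjectiveDimensionLT X (d + n) :=
    hasProjectiveDimensionLT_of_iterate_relSyzygy hC (fun X hX => hd X hX.1 hX.2)
      ⟨hX, (exists_projDimLE_iff X).1 hk⟩ (hn X hX hk).relProjective_iterate_relSyzygy
  exact hasProjectiveDimensionLT_of_ge _ (d + n) _ (by lia)

/-- If `B` is representation-finite, `2 ≤ fd(φ) < ∞`, and `A ⊗_B X` has finite
projective dimension for every f.g. `A`-module `X` of finite projective dimension, then the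
finitistic dimension of `A` is finite. -/
theorem statement1 (φ : B →ₐ[R] A)
    (hB : RepFinite B)
    (hfd_lt_top : ∃ n : ℕ, ∀ X : ModuleCat.{u} A, Module.Finite A X →
      (∃ k : ℕ, ProjDimLE A k X) → RelProjDimLE φ n X)
    (hfd_ge_two : ∃ X : ModuleCat.{u} A, Module.Finite A X ∧
      (∃ k : ℕ, ProjDimLE A k X) ∧ ¬ RelProjDimLE φ 1 X)
    (htensor : ∀ X : ModuleCat.{u} A, Module.Finite A X → (∃ k : ℕ, ProjDimLE A k X) →
      ∃ k : ℕ, ProjDimLE A k (relTensor φ X)) :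
    FinFinDim A := by
  have := IsArtinianRing.of_finite R B
  have := finite_resMod_self φ
  exact statement1_general φ hB hfd_lt_top htensor
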